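/- For every nonempty open subset U of [√2,2] and every L > 0 there exists a parameter s ∈ U such that the tent map f_s has standard shadowing with some accuracy function σ (with σ(ε) → 0 as ε → 0), but f_s does not have standard shadowing with accuracy σ(ε) = L·ε. In particular, no single Lipschitz constant L works for all parameters in U with the shadowing property. -/

import Mathlib

open Set Filter

/-- The tent map with slope `s`, extended to all of ℝ. -/
noncomputable def tentMap (s x : ℝ) : ℝ := if x ≤ 1 / 2 then s * x else s * (1 - x)

/-- The tent map `f_s` has standard shadowing on [0,1] with accuracy σ. -/
def TentHasShadowingWithAccuracy (s : ℝ) (σ : ℝ → ℝ) : Prop :=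
  ∃ ε₀ > (0 : ℝ), ∀ ε ∈ Ioo (0 : ℝ) ε₀, ∀ x : ℕ → ℝ,
    (∀ k : ℕ, x k ∈ Icc (0 : ℝ) 1) →
    (∀ k : ℕ, |tentMap s (x k) - x (k + 1)| ≤ ε) →
    ∃ p ∈ Icc (0 : ℝ) 1, ∀ k : ℕ, |x k - (tentMap s)^[k] p| < σ ε

/-!
The parameters sought are those whose critical point `1 / 2` is periodic.

*They are dense.* If no critical orbit hits `1 / 2` for parameters in an interval, every iterate of
the critical value stays on one side of `1 / 2` there, and solving the expanding recursion along the
critical orbit turns this into a power series with coefficients `±1` that vanishes at `1 / s` for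
all `s` in the interval, which is impossible.

*They have Lipschitz shadowing.* Choose for each `x k` the affine branch of the side it lies on,
breaking near-ties always in favour of one fixed side. The resulting expanding recursion has an
orbit close to `x`. It can fail to be a tent map orbit only by exceeding the critical value `s / 2`.
With the right tie-breaking side, such an overshoot recurs after one critical period `n`, multiplied
by `s ^ n`, which contradicts boundedness.

*The constant is large when the period is long.* A pseudotrajectory that jumps once from `s / 2` to
`s / 2 + ε` follows an orbit which no tent map value, being at most `s / 2`, can accompany: if the
critical orbit avoids `1 / 2` for `N` steps, the error grows to `s ^ N * ε`. Parameters with short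
critical period are roots of finitely many polynomials, so they can be removed from the open set.
-/

open scoped Topology

section ExpandingRecursion

variable {𝕜 E : Type*} [NormedField 𝕜] [NormedAddCommGroup E] [NormedSpace 𝕜 E]
  {a : ℕ → 𝕜} {r d : ℕ → E} {s B C : ℝ}

lemma norm_inv_prod_smul_le (hs : 0 < s) (ha : ∀ k, s ≤ ‖a k‖) (n : ℕ) {v : E} (hv : ‖v‖ ≤ C) :
    ‖(∏ i ∈ Finset.range n, a i)⁻¹ • v‖ ≤ C * s⁻¹ ^ n := by
  have hprod : s ^ n ≤ ∏ i ∈ Finset.range n, ‖a i‖ := by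
    simpa using Finset.prod_le_prod (s := Finset.range n) (fun _ _ ↦ hs.le) fun i _ ↦ ha i
  rw [norm_smul, norm_inv, norm_prod, mul_comm, inv_pow]
  have := (norm_nonneg v).trans hv
  gcongr

lemma hasSum_mul_inv_pow_succ (hs : 1 < s) (C : ℝ) :
    HasSum (fun j : ℕ ↦ C * s⁻¹ ^ (j + 1)) (C / (s - 1)) := by
  have hsum : C / (s - 1) = C * s⁻¹ * (1 - s⁻¹)⁻¹ := by
    rw [div_eq_mul_inv, mul_assoc, ← mul_inv, mul_one_sub, mul_inv_cancel₀ (by positivity)]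
  simp only [hsum, pow_succ', ← mul_assoc]
  exact (hasSum_geometric_of_lt_one (by positivity) (inv_lt_one_of_one_lt₀ hs)).mul_left _

variable [CompleteSpace E]

lemma summable_inv_prod_smul (hs : 1 < s) (ha : ∀ k, s ≤ ‖a k‖) (hr : ∀ k, ‖r k‖ ≤ C) :
    Summable fun j ↦ (∏ i ∈ Finset.range (j + 1), a i)⁻¹ • r j :=
  .of_norm_bounded (hasSum_mul_inv_pow_succ hs C).summable
    fun j ↦ norm_inv_prod_smul_le (by positivity) ha _ (hr j)

lemma exists_bounded_solution_of_expanding (hs : 1 < s) (ha : ∀ k, s ≤ ‖a k‖)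
    (hr : ∀ k, ‖r k‖ ≤ C) :
    ∃ d : ℕ → E, (∀ k, d (k + 1) = a k • d k + r k) ∧ ∀ k, ‖d k‖ ≤ C / (s - 1) := by
  let term (k j : ℕ) : E := (∏ i ∈ Finset.range (j + 1), a (k + i))⁻¹ • r (k + j)
  have hterm (k : ℕ) : Summable (term k) :=
    summable_inv_prod_smul hs (fun i ↦ ha (k + i)) fun j ↦ hr (k + j)
  refine ⟨fun k ↦ -∑' j, term k j, fun k ↦ ?_, fun k ↦ ?_⟩
  · have ha₀ : a k ≠ 0 := norm_pos_iff.1 ((by positivity : 0 < s).trans_le (ha k))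
    have hshift (j : ℕ) : term k (j + 1) = (a k)⁻¹ • term (k + 1) j := by
      simp only [term, smul_smul]
      rw [Finset.prod_range_succ', mul_inv_rev, add_zero]
      simp only [add_assoc, add_comm 1]
    dsimp only
    rw [(hterm k).tsum_eq_zero_add, tsum_congr hshift, tsum_const_smul'']
    simp [term, smul_smul, ha₀]
  · rw [norm_neg]
    exact tsum_of_norm_bounded (hasSum_mul_inv_pow_succ hs C)
      fun j ↦ norm_inv_prod_smul_le (by positivity) (fun i ↦ ha (k + i)) _ (hr (k + j))

lemma hasSum_inv_prod_smul_of_bounded_solution (hs : 1 < s) (ha : ∀ k, s ≤ ‖a k‖)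
    (hr : ∀ k, ‖r k‖ ≤ C) (hd : ∀ k, ‖d k‖ ≤ B) (hrec : ∀ k, d (k + 1) = a k • d k + r k) :
    HasSum (fun j ↦ (∏ i ∈ Finset.range (j + 1), a i)⁻¹ • r j) (-d 0) := by
  have hpartial (n : ℕ) : ∑ j ∈ Finset.range n, (∏ i ∈ Finset.range (j + 1), a i)⁻¹ • r j =
      (∏ i ∈ Finset.range n, a i)⁻¹ • d n - d 0 := by
    induction n with
    | zero => simp
    | succ n ih =>
      have ha₀ : a n ≠ 0 := norm_pos_iff.1 ((by positivity : 0 < s).trans_le (ha n))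
      rw [Finset.sum_range_succ, ih, hrec, smul_add, Finset.prod_range_succ, smul_smul, mul_inv,
        mul_assoc, inv_mul_cancel₀ ha₀, mul_one]
      abel
  have hremainder : Tendsto (fun n ↦ (∏ i ∈ Finset.range n, a i)⁻¹ • d n) atTop (𝓝 0) := by
    refine squeeze_zero_norm
      (fun n ↦ norm_inv_prod_smul_le (by positivity : 0 < s) ha n (hd n)) ?_
    simpa using (tendsto_pow_atTop_nhds_zero_of_lt_one (by positivity)
      (inv_lt_one_of_one_lt₀ hs)).const_mul B
  refine (summable_inv_prod_smul hs ha hr).hasSum_iff_tendsto_nat.2 ?_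
  simp_rw [hpartial]
  simpa using hremainder.sub_const (d 0)

end ExpandingRecursion

lemma nonpos_of_forall_pow_mul_le {s h B : ℝ} (hs : 1 < s) (H : ∀ k : ℕ, s ^ k * h ≤ B) :
    h ≤ 0 := by
  by_contra! hpos
  obtain ⟨k, hk⟩ := pow_unbounded_of_one_lt (B / h) hs
  exact (H k).not_gt ((div_lt_iff₀ hpos).1 hk)

lemma tendsto_const_mul_nhdsGT_zero (K : ℝ) : Tendsto (fun ε ↦ K * ε) (𝓝[>] 0) (𝓝 0) :=
  ((continuous_const_mul K).tendsto' 0 0 (mul_zero K)).mono_left nhdsWithin_le_nhds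

lemma eq_zero_of_frequently_hasSum_zero {𝕜 : Type*} [RCLike 𝕜] {θ : ℕ → 𝕜} {C : ℝ}
    (hθ : ∀ k, ‖θ k‖ ≤ C) {t₀ : 𝕜} (ht₀ : ‖t₀‖ < 1)
    (h : ∃ᶠ t in 𝓝[≠] t₀, HasSum (fun k ↦ θ k * t ^ k) 0) (k : ℕ) : θ k = 0 := by
  let p := FormalMultilinearSeries.ofScalars 𝕜 θ
  have hradius : 1 ≤ p.radius := by
    simpa using p.le_radius_of_bound (r := 1) C fun n ↦ by simpa [p] using hθ n
  have hp := p.hasFPowerSeriesOnBall (one_pos.trans_le hradius)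
  have hanalytic : AnalyticOnNhd 𝕜 p.sum (Metric.ball 0 1) := by
    refine hp.analyticOnNhd.mono ?_
    rw [← Metric.eball_ofReal]
    exact Metric.eball_subset_eball (by simpa using hradius)
  have hfreq : ∃ᶠ t in 𝓝[≠] t₀, p.sum t = 0 := h.mono fun t ht ↦ by
    simpa [FormalMultilinearSeries.sum, p, mul_comm] using ht.tsum_eq
  have hzero : EqOn p.sum 0 (Metric.ball 0 1) :=
    hanalytic.eqOn_zero_of_preconnected_of_frequently_eq_zero
      (convex_ball (0 : 𝕜) 1).isPreconnected (by simpa using ht₀) hfreq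
  have hp₀ : p = 0 := (hp.hasFPowerSeriesAt.congr
    (hzero.eventuallyEq_of_mem (Metric.ball_mem_nhds 0 one_pos))).eq_zero
  exact congrFun ((FormalMultilinearSeries.ofScalars_series_eq_zero 𝕜).1 hp₀) k

lemma exists_abs_eq_mul_of_isPreconnected {X : Type*} [TopologicalSpace X] {S : Set X} {f : X → ℝ}
    (hS : IsPreconnected S) (hf : ContinuousOn f S) (hne : ∀ x ∈ S, f x ≠ 0) :
    ∃ e : ℝ, |e| = 1 ∧ ∀ x ∈ S, |f x| = e * f x := by
  rcases hS.eq_or_eq_neg_of_sq_eq hf.abs hf (fun x _ ↦ by simp) (fun hx ↦ hne _ hx) with h | h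
  · exact ⟨1, by simp, fun x hx ↦ by simpa using h hx⟩
  · exact ⟨-1, by simp, fun x hx ↦ by simpa using h hx⟩

lemma dist_iterate_le_of_pseudotrajectory {X : Type*} [PseudoMetricSpace X] {f : X → X}
    {K : NNReal} (hf : LipschitzWith K f) {x : ℕ → X} {ε : ℝ}
    (hx : ∀ k, dist (f (x k)) (x (k + 1)) ≤ ε) (k n : ℕ) :
    dist (f^[n] (x k)) (x (k + n)) ≤ (∑ i ∈ Finset.range n, (K : ℝ) ^ i) * ε := by
  induction n with
  | zero => simp
  | succ n ih =>
    calc dist (f^[n + 1] (x k)) (x (k + (n + 1)))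
        ≤ dist (f (f^[n] (x k))) (f (x (k + n))) + dist (f (x (k + n))) (x (k + n + 1)) := by
          rw [Function.iterate_succ_apply']; exact dist_triangle _ _ _
      _ ≤ K * ((∑ i ∈ Finset.range n, (K : ℝ) ^ i) * ε) + ε := by
          gcongr
          · exact (hf.dist_le_mul _ _).trans (by gcongr)
          · exact hx _
      _ = (∑ i ∈ Finset.range (n + 1), (K : ℝ) ^ i) * ε := by rw [geom_sum_succ]; ring

section TentMap

variable {s x y u : ℝ}

lemma tentMap_eq_sub_abs (s x : ℝ) : tentMap s x = s / 2 - s * |x - 1 / 2| := by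
  unfold tentMap
  split_ifs with h
  · rw [abs_of_nonpos (by linarith)]; ring
  · rw [abs_of_pos (by linarith)]; ring

lemma tentMap_half (s : ℝ) : tentMap s (1 / 2) = s / 2 := by simp [tentMap_eq_sub_abs]

lemma tentMap_le_half (hs : 0 ≤ s) (x : ℝ) : tentMap s x ≤ s / 2 := by
  rw [tentMap_eq_sub_abs]
  have : 0 ≤ s * |x - 1 / 2| := by positivity
  linarith

lemma tentMap_le_mul (hs : 0 ≤ s) (x : ℝ) : tentMap s x ≤ s * x := by
  rw [tentMap_eq_sub_abs]
  nlinarith [neg_abs_le (x - 1 / 2)]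

lemma tentMap_le_mul_one_sub (hs : 0 ≤ s) (x : ℝ) : tentMap s x ≤ s * (1 - x) := by
  rw [tentMap_eq_sub_abs]
  nlinarith [le_abs_self (x - 1 / 2)]

lemma mapsTo_tentMap_Icc (hs : 0 ≤ s) (hs₂ : s ≤ 2) :
    MapsTo (tentMap s) (Icc 0 1) (Icc 0 1) := by
  intro x hx
  have hx' : |x - 1 / 2| ≤ 1 / 2 := abs_le.2 ⟨by linarith [hx.1], by linarith [hx.2]⟩
  refine ⟨?_, (tentMap_le_half hs x).trans (by linarith)⟩
  rw [tentMap_eq_sub_abs]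
  nlinarith

lemma lipschitzWith_tentMap (s : ℝ) : LipschitzWith ‖s‖₊ (tentMap s) := by
  refine LipschitzWith.of_dist_le_mul fun x y ↦ ?_
  calc dist (tentMap s x) (tentMap s y) = |s| * |(|y - 1 / 2| - |x - 1 / 2|)| := by
        rw [Real.dist_eq, tentMap_eq_sub_abs, tentMap_eq_sub_abs, ← abs_mul]; ring_nf
    _ ≤ |s| * |y - 1 / 2 - (x - 1 / 2)| :=
        mul_le_mul_of_nonneg_left (abs_abs_sub_abs_le _ _) (abs_nonneg s)
    _ = ‖s‖₊ * dist x y := by rw [sub_sub_sub_cancel_right, dist_comm]; rfl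

lemma continuous_uncurry_iterate_tentMap (n : ℕ) :
    Continuous fun q : ℝ × ℝ ↦ (tentMap q.1)^[n] q.2 := by
  induction n with
  | zero => exact continuous_snd
  | succ n ih =>
    simp only [Function.iterate_succ_apply', tentMap_eq_sub_abs]
    fun_prop

lemma mem_Icc_of_iterate_tentMap_ge (hs : 1 < s) {B : ℝ} (h : ∀ k, -B ≤ (tentMap s)^[k] x) :
    x ∈ Icc (0 : ℝ) 1 := by
  have hs₀ : 0 ≤ s := by positivity
  have hnonneg (y : ℝ) (hy : ∀ k, -B ≤ (tentMap s)^[k] y) : 0 ≤ y := by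
    have hle (k : ℕ) : (tentMap s)^[k] y ≤ s ^ k * y := by
      induction k with
      | zero => simp
      | succ k ih =>
        rw [Function.iterate_succ_apply', pow_succ', mul_assoc]
        exact (tentMap_le_mul hs₀ _).trans (by gcongr)
    have := nonpos_of_forall_pow_mul_le (h := -y) (B := B) hs fun k ↦ by
      linarith [hy k, hle k]
    linarith
  refine ⟨hnonneg x h, ?_⟩
  have := hnonneg (tentMap s x) fun k ↦ h (k + 1)
  nlinarith [tentMap_le_mul_one_sub hs₀ x]

/-- The affine branch of the tent map on the side `u = 1` (right) or `u = -1` (left) of the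
turning point `1 / 2`, extended to all of `ℝ`. -/
noncomputable def tentBranch (s u x : ℝ) : ℝ := s / 2 - s * (u * (x - 1 / 2))

lemma tentBranch_sub_tentBranch (s u x y : ℝ) :
    tentBranch s u x - tentBranch s u y = -(s * u) * (x - y) := by
  unfold tentBranch; ring

lemma tentMap_eq_tentBranch (hu : |u| = 1) (hx : 0 ≤ u * (x - 1 / 2)) :
    tentMap s x = tentBranch s u x := by
  rw [tentMap_eq_sub_abs, tentBranch, ← abs_of_nonneg hx, abs_mul, hu, one_mul]

lemma abs_tentBranch_sub_tentMap_le (hs : 0 ≤ s) {μ : ℝ} (hμ : 0 ≤ μ) (hu : |u| = 1)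
    (hx : -μ ≤ u * (x - 1 / 2)) : |tentBranch s u x - tentMap s x| ≤ 2 * s * μ := by
  have habs : |x - 1 / 2| = |u * (x - 1 / 2)| := by rw [abs_mul, hu, one_mul]
  have hgap : |(|u * (x - 1 / 2)| - u * (x - 1 / 2))| ≤ 2 * μ := by
    rw [abs_of_nonneg (sub_nonneg.2 (le_abs_self (u * (x - 1 / 2))))]
    rcases abs_cases (u * (x - 1 / 2)) with ⟨h, -⟩ | ⟨h, -⟩ <;> rw [h] <;> linarith
  calc |tentBranch s u x - tentMap s x| = s * |(|u * (x - 1 / 2)| - u * (x - 1 / 2))| := by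
        rw [← abs_of_nonneg hs, ← abs_mul, abs_of_nonneg hs, tentBranch, tentMap_eq_sub_abs, habs]
        ring_nf
    _ ≤ s * (2 * μ) := by gcongr
    _ = 2 * s * μ := by ring

lemma exists_side_of_ne_half (hx : x ≠ 1 / 2) : ∃ u : ℝ, |u| = 1 ∧ 0 < u * (x - 1 / 2) := by
  rcases hx.lt_or_gt with h | h
  · exact ⟨-1, by simp, by linarith⟩
  · exact ⟨1, by simp, by linarith⟩

lemma exists_eventually_iterate_tentMap_affine (s : ℝ) {m : ℕ}
    (h : ∀ j < m, (tentMap s)^[j] y ≠ 1 / 2) :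
    ∃ θ : ℝ, |θ| = 1 ∧
      ∀ᶠ z in 𝓝 y, (tentMap s)^[m] z = (tentMap s)^[m] y + θ * s ^ m * (z - y) := by
  induction m with
  | zero => exact ⟨1, by simp, by simp⟩
  | succ m ih =>
    obtain ⟨θ, hθ, haffine⟩ := ih fun j hj ↦ h j (by lia)
    obtain ⟨u, hu, hside⟩ := exists_side_of_ne_half (h m (by lia))
    have hcont : Continuous fun z ↦ u * ((tentMap s)^[m] z - 1 / 2) := by
      have := (lipschitzWith_tentMap s).continuous.iterate m
      fun_prop
    refine ⟨-(u * θ), by rw [abs_neg, abs_mul, hu, hθ, one_mul], ?_⟩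
    filter_upwards [haffine, hcont.continuousAt.eventually_const_lt hside] with z hz hzside
    rw [Function.iterate_succ_apply', Function.iterate_succ_apply',
      tentMap_eq_tentBranch hu hzside.le, tentMap_eq_tentBranch hu hside.le, ← sub_eq_iff_eq_add',
      tentBranch_sub_tentBranch, hz]
    ring

lemma exists_radius_iterate_tentMap_affine (s : ℝ) {m : ℕ}
    (h : ∀ j < m, (tentMap s)^[j] y ≠ 1 / 2) :
    ∃ η > 0, ∃ θ : ℝ, |θ| = 1 ∧ ∀ z, |z - y| < η →
      (∀ j < m, η < |(tentMap s)^[j] z - 1 / 2|) ∧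
        (tentMap s)^[m] z = (tentMap s)^[m] y + θ * s ^ m * (z - y) := by
  obtain ⟨θ, hθ, haffine⟩ := exists_eventually_iterate_tentMap_affine s h
  have hfar : ∀ᶠ q : ℝ × ℝ in 𝓝 (0, y), ∀ j ∈ Finset.range m,
      q.1 < |(tentMap s)^[j] q.2 - 1 / 2| := by
    refine (Finset.eventually_all _).2 fun j hj ↦ ?_
    have hcont := (lipschitzWith_tentMap s).continuous.iterate j
    exact ContinuousAt.eventually_lt (by fun_prop) (by fun_prop)
      (abs_pos.2 (sub_ne_zero.2 (h j (Finset.mem_range.1 hj))))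
  obtain ⟨η, hη, hball⟩ := Metric.eventually_nhds_iff.1
    (hfar.and (continuousAt_snd.eventually haffine))
  refine ⟨η / 2, half_pos hη, θ, hθ, fun z hz ↦ ?_⟩
  obtain ⟨hz₁, hz₂⟩ := hball (y := (η / 2, z)) (by
    simp only [Prod.dist_eq, Real.dist_eq, sub_zero, abs_of_pos (half_pos hη)]
    exact max_lt (by linarith) (by linarith))
  exact ⟨fun j hj ↦ hz₁ j (Finset.mem_range.2 hj), hz₂⟩

end TentMap

section Shadowing

variable {s ε δ μ : ℝ} {x p u : ℕ → ℝ}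

/-- An orbit `p` of the affine branches `tentBranch s (u k)` that stays `δ`-close to `x`, where
the side `u k` may be the wrong one for `x k` only if `x k` is within `μ` of the turning point.
Such a `p` is a tent map orbit as soon as it never exceeds the critical value `s / 2`. -/
structure IsBranchShadow (s δ μ : ℝ) (x p u : ℕ → ℝ) : Prop where
  abs_side (k : ℕ) : |u k| = 1
  side (k : ℕ) : -μ ≤ u k * (x k - 1 / 2)
  succ (k : ℕ) : p (k + 1) = tentBranch s (u k) (p k)
  close (k : ℕ) : |p k - x k| ≤ δ

lemma exists_isBranchShadow (hs : 1 < s) (hμ : 0 ≤ μ) {τ : ℝ} (hτ : |τ| = 1)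
    (hx : ∀ k, |tentMap s (x k) - x (k + 1)| ≤ ε) :
    ∃ p u, IsBranchShadow s ((2 * s * μ + ε) / (s - 1)) μ x p u ∧
      ∀ k, -μ ≤ τ * (x k - 1 / 2) → u k = τ := by
  have hs₀ : 0 ≤ s := by positivity
  let u (k : ℕ) : ℝ := if -μ ≤ τ * (x k - 1 / 2) then τ else -τ
  have hu (k : ℕ) : |u k| = 1 := by dsimp only [u]; split_ifs <;> simp [hτ]
  have hside (k : ℕ) : -μ ≤ u k * (x k - 1 / 2) := by
    dsimp only [u]; split_ifs with h
    · exact h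
    · linarith
  obtain ⟨d, hd, hdle⟩ := exists_bounded_solution_of_expanding (a := fun k ↦ -(s * u k))
    (r := fun k ↦ tentBranch s (u k) (x k) - x (k + 1)) (C := 2 * s * μ + ε) hs
    (fun k ↦ by rw [norm_neg, norm_mul, Real.norm_eq_abs, Real.norm_eq_abs, hu, mul_one]
                exact le_abs_self s)
    (fun k ↦ (abs_sub_le _ (tentMap s (x k)) _).trans
      (add_le_add (abs_tentBranch_sub_tentMap_le hs₀ hμ (hu k) (hside k)) (hx k)))
  refine ⟨fun k ↦ x k + d k, u, ⟨hu, hside, fun k ↦ ?_, fun k ↦ ?_⟩, fun k hk ↦ if_pos hk⟩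
  · rw [hd, tentBranch, tentBranch, smul_eq_mul]; ring
  · simpa using hdle k

lemma neg_le_side_of_return (hs : 0 ≤ s) {m : ℕ} {θ y z : ℝ} (hθ : |θ| = 1)
    (hreturn : (tentMap s)^[m] (tentMap s y) = 1 / 2 + θ * s ^ m * (tentMap s y - s / 2))
    (hz : |(tentMap s)^[m + 1] y - z| ≤ μ) : -μ ≤ -θ * (z - 1 / 2) := by
  have hθθ : θ * θ = 1 := by rw [← abs_mul_abs_self, hθ, one_mul]
  have hcorrect : 0 ≤ -θ * ((tentMap s)^[m + 1] y - 1 / 2) := by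
    calc 0 ≤ s ^ m * (s / 2 - tentMap s y) :=
          mul_nonneg (by positivity) (sub_nonneg.2 (tentMap_le_half hs _))
      _ = -θ * ((tentMap s)^[m + 1] y - 1 / 2) := by
          rw [Function.iterate_succ_apply, hreturn]
          linear_combination -(s ^ m * (s / 2 - tentMap s y)) * hθθ
  have hdev : |θ * ((tentMap s)^[m + 1] y - z)| ≤ μ := by
    rwa [abs_mul, hθ, one_mul]
  linarith [neg_le_of_abs_le hdev]

namespace IsBranchShadow

variable {k m : ℕ} {η θ : ℝ}

lemma abs_sub_half_le (h : IsBranchShadow s δ μ x p u) (hne : tentMap s (p k) ≠ p (k + 1)) :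
    |p k - 1 / 2| ≤ δ + μ := by
  have hneg : u k * (p k - 1 / 2) < 0 := by
    contrapose! hne
    rw [h.succ, tentMap_eq_tentBranch (h.abs_side k) hne]
  have hdev : |u k * (p k - x k)| ≤ δ := by
    rw [abs_mul, h.abs_side, one_mul]; exact h.close k
  calc |p k - 1 / 2| = -(u k * (p k - 1 / 2)) := by
        rw [← abs_of_neg hneg, abs_mul, h.abs_side, one_mul]
    _ = -(u k * (p k - x k)) - u k * (x k - 1 / 2) := by ring
    _ ≤ δ + μ := by linarith [neg_le_of_abs_le hdev, h.side k]

lemma eq_iterate (h : IsBranchShadow s δ μ x p u)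
    (hfar : ∀ j < m, δ + μ < |(tentMap s)^[j] (p k) - 1 / 2|) {j : ℕ} (hj : j ≤ m) :
    p (k + j) = (tentMap s)^[j] (p k) := by
  induction j with
  | zero => rfl
  | succ j ih =>
    have hpj := ih (by lia)
    rw [Function.iterate_succ_apply', ← hpj]
    by_contra hne
    exact (hfar j hj).not_ge (hpj ▸ h.abs_sub_half_le (Ne.symm hne))

/-- If `p` overshoots the critical value, it comes back to the turning point on the side opposite
to `-θ`, where the branch `-θ` sends it above the critical value again. -/
lemma overshoot_return (h : IsBranchShadow s δ μ x p u) (hs : 0 ≤ s)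
    (hη : ∀ y, |y - s / 2| < η → (∀ j < m, η < |(tentMap s)^[j] y - 1 / 2|) ∧
      (tentMap s)^[m] y = 1 / 2 + θ * s ^ m * (y - s / 2))
    (hθ : |θ| = 1) (hθu : ∀ i, -μ ≤ -θ * (x i - 1 / 2) → u i = -θ)
    (hx : ∀ i, |(tentMap s)^[m + 1] (x i) - x (i + (m + 1))| ≤ μ)
    (hδμ : δ + μ < η) (hsδμ : s * (2 * δ + μ) < η) (hk : s / 2 < p (k + 1)) :
    p (k + (m + 1) + 1) - s / 2 = s ^ (m + 1) * (p (k + 1) - s / 2) := by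
  have hpk : |p k - 1 / 2| ≤ δ + μ :=
    h.abs_sub_half_le ((tentMap_le_half hs _).trans_lt hk).ne
  have hδ : 0 ≤ δ := (abs_nonneg _).trans (h.close k)
  have hxk : |x k - 1 / 2| ≤ 2 * δ + μ := by
    have := abs_sub_le (x k) (p k) (1 / 2)
    linarith [h.close k, abs_sub_comm (x k) (p k)]
  have hpnear : |p (k + 1) - s / 2| < η := by
    rw [h.succ, tentBranch, sub_sub_cancel_left, abs_neg, abs_mul, abs_mul, h.abs_side, one_mul,
      abs_of_nonneg hs]
    nlinarith
  have hxnear : |tentMap s (x k) - s / 2| < η := by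
    rw [tentMap_eq_sub_abs, sub_sub_cancel_left, abs_neg, abs_mul, abs_abs, abs_of_nonneg hs]
    nlinarith
  have hreturn : p (k + (m + 1)) = 1 / 2 + θ * s ^ m * (p (k + 1) - s / 2) := by
    rw [show k + (m + 1) = k + 1 + m by lia,
      h.eq_iterate (fun j hj ↦ hδμ.trans ((hη _ hpnear).1 j hj)) le_rfl, (hη _ hpnear).2]
  have hside : u (k + (m + 1)) = -θ :=
    hθu _ (neg_le_side_of_return hs hθ (hη _ hxnear).2 (hx k))
  have hθθ : θ * θ = 1 := by rw [← abs_mul_abs_self, hθ, one_mul]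
  rw [h.succ, hside, tentBranch, hreturn]
  linear_combination s * s ^ m * (p (k + 1) - s / 2) * hθθ

lemma le_half_of_overshoot_return (h : IsBranchShadow s δ μ x p u) (hs : 1 < s)
    (hx : ∀ i, x i ≤ 1) (hreturn : ∀ k, s / 2 < p (k + 1) →
      p (k + (m + 1) + 1) - s / 2 = s ^ (m + 1) * (p (k + 1) - s / 2)) (k : ℕ) :
    p (k + 1) ≤ s / 2 := by
  by_contra! hk
  have hgrowth (i : ℕ) :
      p (k + i * (m + 1) + 1) - s / 2 = (s ^ (m + 1)) ^ i * (p (k + 1) - s / 2) := by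
    induction i with
    | zero => simp
    | succ i ih =>
      have hpos : 0 < (s ^ (m + 1)) ^ i * (p (k + 1) - s / 2) :=
        mul_pos (by positivity) (sub_pos.2 hk)
      rw [add_one_mul, ← add_assoc, hreturn _ (by linarith), ih]
      ring
  have := nonpos_of_forall_pow_mul_le (B := 1 + δ - s / 2) (one_lt_pow₀ hs m.succ_ne_zero)
    fun i ↦ (hgrowth i).symm.trans_le <| by
      linarith [le_of_abs_le (h.close (k + i * (m + 1) + 1)), hx (k + i * (m + 1) + 1)]
  linarith

lemma eq_iterate_of_forall_le_half (h : IsBranchShadow s δ μ x p u) (hs : 0 < s)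
    (hp : ∀ k, p (k + 1) ≤ s / 2) (k : ℕ) : p k = (tentMap s)^[k] (p 0) := by
  induction k with
  | zero => rfl
  | succ k ih =>
    have hside : 0 ≤ u k * (p k - 1 / 2) := by
      have := hp k
      rw [h.succ, tentBranch] at this
      exact nonneg_of_mul_nonneg_right (by linarith) hs
    rw [Function.iterate_succ_apply', ← ih, h.succ, tentMap_eq_tentBranch (h.abs_side k) hside]

end IsBranchShadow

theorem exists_lipschitz_shadowing (hs : 1 < s) (hcrit : ∃ n, (tentMap s)^[n] (s / 2) = 1 / 2) :
    ∃ K > 0, TentHasShadowingWithAccuracy s fun ε ↦ K * ε := by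
  classical
  have hs₀ : 0 < s := by positivity
  have : 0 < s - 1 := sub_pos.2 hs
  let m := Nat.find hcrit
  have hm : (tentMap s)^[m] (s / 2) = 1 / 2 := Nat.find_spec hcrit
  obtain ⟨η, hη₀, θ, hθ, hη⟩ := exists_radius_iterate_tentMap_affine s
    fun j hj ↦ Nat.find_min hcrit (m := j) hj
  rw [hm] at hη
  let M := ∑ i ∈ Finset.range (m + 1), (‖s‖₊ : ℝ) ^ i
  have : 0 ≤ M := by positivity
  let K := (2 * s * M + 1) / (s - 1)
  have : 0 < K := by positivity
  refine ⟨K + 1, by positivity, min (η / (K + M)) (η / (s * (2 * K + M))), by positivity, ?_⟩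
  rintro ε ⟨hε, hεη⟩ x hx01 hx
  obtain ⟨p, u, h, hu⟩ := exists_isBranchShadow (μ := M * ε) (τ := -θ) hs (by positivity)
    (by rwa [abs_neg]) hx
  have hδ : (2 * s * (M * ε) + ε) / (s - 1) = K * ε := by simp only [K]; ring
  rw [hδ] at h
  rw [lt_min_iff, lt_div_iff₀ (by positivity), lt_div_iff₀ (by positivity)] at hεη
  have hhalf := h.le_half_of_overshoot_return hs (fun i ↦ (hx01 i).2) fun k ↦
    h.overshoot_return hs₀.le hη hθ hu
      (fun i ↦ dist_iterate_le_of_pseudotrajectory (lipschitzWith_tentMap s) hx i (m + 1))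
      (by linarith [hεη.1]) (by linarith [hεη.2])
  have hclose (k : ℕ) : |(tentMap s)^[k] (p 0) - x k| ≤ K * ε := by
    rw [← h.eq_iterate_of_forall_le_half hs₀ hhalf]; exact h.close k
  refine ⟨p 0, mem_Icc_of_iterate_tentMap_ge hs (B := K * ε) fun k ↦ ?_, fun k ↦ ?_⟩
  · linarith [neg_le_of_abs_le (hclose k), (hx01 k).1]
  · rw [abs_sub_comm]
    linarith [hclose k]

theorem not_shadowing_of_le_pow {L : ℝ} {N : ℕ} (hs : 0 ≤ s) (hs₂ : s < 2)
    (hcrit : ∀ j < N, (tentMap s)^[j] (s / 2) ≠ 1 / 2) (hL : L ≤ s ^ N) :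
    ¬ TentHasShadowingWithAccuracy s fun ε ↦ L * ε := by
  rintro ⟨ε₀, hε₀, hshadow⟩
  obtain ⟨η, hη₀, θ, hθ, hη⟩ := exists_radius_iterate_tentMap_affine s hcrit
  obtain ⟨ε, hε, hεε₀, hεs, hεη, hεL⟩ : ∃ ε > 0, ε < ε₀ ∧ ε < 1 - s / 2 ∧ ε < η ∧
      (L + 1) * ε < η := by
    have hlt {c : ℝ} (hc : 0 < c) : ∀ᶠ ε in 𝓝[>] (0 : ℝ), ε < c :=
      eventually_nhdsWithin_of_eventually_nhds (gt_mem_nhds hc)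
    exact (eventually_mem_nhdsWithin.and ((hlt hε₀).and ((hlt (by linarith)).and
      ((hlt hη₀).and ((tendsto_const_mul_nhdsGT_zero _).eventually_lt_const hη₀))))).exists
  let x (k : ℕ) : ℝ := k.casesOn (1 / 2) fun j ↦ (tentMap s)^[j] (s / 2 + ε)
  have hx01 (k : ℕ) : x k ∈ Icc (0 : ℝ) 1 := by
    cases k with
    | zero => norm_num [x]
    | succ j =>
      exact (mapsTo_tentMap_Icc hs hs₂.le).iterate j ⟨by positivity, by linarith⟩
  have hx (k : ℕ) : |tentMap s (x k) - x (k + 1)| ≤ ε := by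
    cases k with
    | zero => simp [x, tentMap_eq_sub_abs, abs_of_pos hε]
    | succ j => simpa [x, Function.iterate_succ_apply' _ j] using hε.le
  obtain ⟨p, -, hp⟩ := hshadow ε ⟨hε, hεε₀⟩ x hx01 hx
  have hple := tentMap_le_half hs p
  have hp₁ : |s / 2 + ε - tentMap s p| < L * ε := hp 1
  have hpN : |(tentMap s)^[N] (s / 2 + ε) - (tentMap s)^[N] (tentMap s p)| < L * ε := hp (N + 1)
  have hnear : |s / 2 + ε - s / 2| < η := by rwa [add_sub_cancel_left, abs_of_pos hε]
  have hpnear : |tentMap s p - s / 2| < η :=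
    abs_lt.2 ⟨by linarith [(abs_lt.1 hp₁).2], by linarith⟩
  rw [(hη _ hnear).2, (hη _ hpnear).2] at hpN
  have hdist : s ^ N * ε < L * ε := by
    calc s ^ N * ε ≤ s ^ N * (s / 2 + ε - tentMap s p) := by gcongr; linarith
      _ ≤ |s ^ N * (s / 2 + ε - tentMap s p)| := le_abs_self _
      _ = |θ * (s ^ N * (s / 2 + ε - tentMap s p))| := by rw [abs_mul θ, hθ, one_mul]
      _ < L * ε := by convert hpN using 2; ring
  exact hL.not_gt (lt_of_mul_lt_mul_right hdist hε.le)

end Shadowing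

section CriticalParameters

lemma exists_finite_polynomials_iterate_tentMap (x : ℝ) (n : ℕ) :
    ∃ S : Set (Polynomial ℝ), S.Finite ∧
      ∀ s, ∃ P ∈ S, (tentMap s)^[n + 1] x = (Polynomial.X * P).eval s := by
  induction n with
  | zero =>
    refine ⟨{.C x, .C (1 - x)}, toFinite _, fun s ↦ ?_⟩
    rcases le_or_gt x (1 / 2) with h | h
    · exact ⟨_, .inl rfl, by
        rw [zero_add, Function.iterate_one, tentMap, if_pos h, Polynomial.eval_mul,
          Polynomial.eval_X, Polynomial.eval_C]⟩
    · exact ⟨_, .inr rfl, by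
        rw [zero_add, Function.iterate_one, tentMap, if_neg h.not_ge, Polynomial.eval_mul,
          Polynomial.eval_X, Polynomial.eval_C]⟩
  | succ n ih =>
    obtain ⟨S, hS, hP⟩ := ih
    refine ⟨(Polynomial.X * ·) '' S ∪ (1 - Polynomial.X * ·) '' S, (hS.image _).union (hS.image _),
      fun s ↦ ?_⟩
    obtain ⟨P, hPS, hPs⟩ := hP s
    rw [Function.iterate_succ_apply', hPs, tentMap]
    split_ifs
    · exact ⟨_, .inl ⟨P, hPS, rfl⟩, by simp⟩
    · exact ⟨_, .inr ⟨P, hPS, rfl⟩, by simp⟩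

lemma finite_setOf_iterate_tentMap_eq (x : ℝ) {y : ℝ} (hy : y ≠ 0) (n : ℕ) :
    {s : ℝ | (tentMap s)^[n + 1] x = y}.Finite := by
  obtain ⟨S, hS, hP⟩ := exists_finite_polynomials_iterate_tentMap x n
  have hne (P : Polynomial ℝ) : Polynomial.X * P - .C y ≠ 0 := fun h ↦ by
    simpa [hy] using congrArg (Polynomial.eval 0) h
  refine (hS.biUnion fun P _ ↦ Polynomial.finite_setOfPred_isRoot (hne P)).subset fun s hs ↦ ?_
  obtain ⟨P, hPS, hPs⟩ := hP s
  refine mem_biUnion hPS ?_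
  simp only [mem_ofPred_eq, Polynomial.IsRoot, Polynomial.eval_sub, Polynomial.eval_C] at hs ⊢
  rw [← hPs, hs, sub_self]

/-- The coefficients are the signs of the slopes of the iterates near the critical value. -/
lemma hasSum_kneading_series {s : ℝ} (hs : 1 < s) (hs₂ : s ≤ 2) {e : ℕ → ℝ} (he : ∀ n, |e n| = 1)
    (hside : ∀ n, |(tentMap s)^[n] (s / 2) - 1 / 2| = e n * ((tentMap s)^[n] (s / 2) - 1 / 2)) :
    HasSum (fun n ↦ (∏ i ∈ Finset.range n, -e i)⁻¹ * s⁻¹ ^ n) 0 := by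
  have hs₁ : (s - 1) / 2 ≠ 0 := by linarith
  have hbounded (n : ℕ) : ‖(tentMap s)^[n] (s / 2) - 1 / 2‖ ≤ 1 / 2 := by
    have := (mapsTo_tentMap_Icc (by positivity) hs₂).iterate n
      (show s / 2 ∈ Icc (0 : ℝ) 1 from ⟨by positivity, by linarith⟩)
    exact abs_le.2 ⟨by linarith [this.1], by linarith [this.2]⟩
  have hsum := (hasSum_inv_prod_smul_of_bounded_solution (a := fun n ↦ s * -e n)
    (r := fun _ ↦ (s - 1) / 2) hs
    (fun n ↦ by rw [norm_mul, norm_neg, Real.norm_eq_abs, Real.norm_eq_abs, he, mul_one]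
                exact le_abs_self s) (fun _ ↦ le_rfl) hbounded
    (fun n ↦ by rw [Function.iterate_succ_apply', tentMap_eq_sub_abs, hside, smul_eq_mul]
                ring)).mul_right ((s - 1) / 2)⁻¹
  have hstart : -((tentMap s)^[0] (s / 2) - 1 / 2) * ((s - 1) / 2)⁻¹ = -1 := by
    rw [Function.iterate_zero_apply, ← sub_div, neg_mul, mul_inv_cancel₀ hs₁]
  rw [hstart] at hsum
  simp only [smul_eq_mul, mul_inv_cancel_right₀ hs₁, Finset.prod_mul_distrib, Finset.prod_const,
    Finset.card_range, mul_inv, ← inv_pow, mul_comm (s⁻¹ ^ _)] at hsum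
  simpa using hsum.zero_add (f := fun n ↦ (∏ i ∈ Finset.range n, -e i)⁻¹ * s⁻¹ ^ n)

theorem exists_iterate_tentMap_eq_half_of_isOpen {V : Set ℝ} (hV : IsOpen V)
    (hne : (V ∩ Ioo 1 2).Nonempty) :
    ∃ s ∈ V ∩ Ioo 1 2, ∃ n, (tentMap s)^[n] (s / 2) = 1 / 2 := by
  by_contra! hcrit
  obtain ⟨v, hv⟩ := hne
  obtain ⟨ρ, hρ, hball⟩ := Metric.isOpen_iff.1 (hV.inter isOpen_Ioo) v hv
  have hcont (n : ℕ) : Continuous fun s : ℝ ↦ (tentMap s)^[n] (s / 2) - 1 / 2 :=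
    ((continuous_uncurry_iterate_tentMap n).comp
      (continuous_id.prodMk (continuous_id.div_const 2))).sub continuous_const
  choose e he hside using fun n ↦ exists_abs_eq_mul_of_isPreconnected
    (convex_ball v ρ).isPreconnected (hcont n).continuousOn
    fun s hs ↦ sub_ne_zero.2 (hcrit s (hball hs) n)
  have hv₁ : 1 < v := hv.2.1
  have hzero : ∀ᶠ t in 𝓝 v⁻¹,
      HasSum (fun n ↦ (∏ i ∈ Finset.range n, -e i)⁻¹ * t ^ n) 0 := by
    have hinv : Tendsto (·⁻¹) (𝓝 v⁻¹) (𝓝 v) := by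
      simpa using (continuousAt_inv₀ (inv_ne_zero (by positivity : v ≠ 0))).tendsto
    filter_upwards [hinv.eventually_mem (Metric.ball_mem_nhds v hρ)] with t ht
    simpa using hasSum_kneading_series (hball ht).2.1 (hball ht).2.2.le he fun n ↦ hside n _ ht
  have hcoeff := eq_zero_of_frequently_hasSum_zero (C := 1)
    (fun n ↦ by simp [he]) (t₀ := v⁻¹)
    (by simpa [abs_of_pos (one_pos.trans hv₁)] using inv_lt_one_of_one_lt₀ hv₁)
    (hzero.filter_mono nhdsWithin_le_nhds).frequently 0
  simp at hcoeff

end CriticalParameters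

theorem tent_map_no_uniform_lipschitz_shadowing_constant_general
    (U : Set ℝ) (hU : IsOpen U) (hUne : (U ∩ Ioo 1 2).Nonempty) (L : ℝ) :
    ∃ s ∈ U ∩ Ioo 1 2,
      (∃ K > 0, TentHasShadowingWithAccuracy s fun ε ↦ K * ε) ∧
      ¬ TentHasShadowingWithAccuracy s fun ε ↦ L * ε := by
  obtain ⟨v, hvU, hv⟩ := hUne
  obtain ⟨b, hb, hbv⟩ := exists_between hv.1
  obtain ⟨N, hN⟩ := pow_unbounded_of_one_lt L hb
  let F : Set ℝ := ⋃ j ∈ Finset.range N, {s | (tentMap s)^[j] (s / 2) = 1 / 2}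
  have hF : F.Finite := (Finset.finite_toSet _).biUnion fun j _ ↦ by
    simpa only [Function.iterate_succ_apply, tentMap_half] using
      finite_setOf_iterate_tentMap_eq (1 / 2) (by norm_num : (1 / 2 : ℝ) ≠ 0) j
  have hW : IsOpen (U ∩ Ioo b 2) := hU.inter isOpen_Ioo
  obtain ⟨w, ⟨hwU, hw⟩, hwF⟩ :=
    ((infinite_of_mem_nhds v (hW.mem_nhds ⟨hvU, hbv, hv.2⟩)).sdiff hF).nonempty
  obtain ⟨s, ⟨⟨⟨hsU, hsb⟩, hsF⟩, hs⟩, hcrit⟩ := exists_iterate_tentMap_eq_half_of_isOpen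
    (hW.sdiff hF.isClosed) ⟨w, ⟨⟨hwU, hw⟩, hwF⟩, hb.trans hw.1, hw.2⟩
  refine ⟨s, ⟨hsU, hs⟩, exists_lipschitz_shadowing hs.1 hcrit,
    not_shadowing_of_le_pow (N := N) (by linarith [hs.1]) hs.2 (fun j hj hjs ↦ hsF ?_)
      (hN.le.trans (pow_le_pow_left₀ (by positivity) hsb.1.le N))⟩
  exact mem_biUnion (Finset.mem_range.2 hj) hjs

/-- In every nonempty open subset of [√2,2] and for every L > 0 there is a
parameter s whose tent map has standard shadowing with some accuracy function
(tending to 0 at 0), but not with the Lipschitz accuracy σ(ε) = L·ε: no single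
Lipschitz shadowing constant works on any open set of parameters. -/
theorem tent_map_no_uniform_lipschitz_shadowing_constant
    (U : Set ℝ) (hU : IsOpen U) (hUne : (U ∩ Icc (Real.sqrt 2) 2).Nonempty)
    (L : ℝ) (hL : 0 < L) :
    ∃ s ∈ U ∩ Icc (Real.sqrt 2) 2,
      (∃ σ : ℝ → ℝ, (∀ ε > (0 : ℝ), 0 < σ ε) ∧
        Tendsto σ (nhdsWithin 0 (Ioi 0)) (nhds 0) ∧
        TentHasShadowingWithAccuracy s σ) ∧
      ¬ TentHasShadowingWithAccuracy s (fun ε => L * ε) := by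
  have hsqrt₁ : 1 < √2 := Real.lt_sqrt_of_sq_lt (by norm_num)
  have hsqrt₂ : √2 ≠ 2 := ((Real.sqrt_lt' two_pos).2 (by norm_num)).ne
  have hV : IsOpen (U ∩ Ioo (√2) 2) := hU.inter isOpen_Ioo
  obtain ⟨v, hvU, hv⟩ : (U ∩ Ioo (√2) 2).Nonempty := by
    rwa [inter_comm, ← closure_inter_open_nonempty_iff hU, closure_Ioo hsqrt₂, inter_comm]
  obtain ⟨s, ⟨⟨hsU, hs⟩, -⟩, ⟨K, hK, hshadow⟩, hnot⟩ :=
    tent_map_no_uniform_lipschitz_shadowing_constant_general _ hV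
      ⟨v, ⟨hvU, hv⟩, hsqrt₁.trans hv.1, hv.2⟩ L
  exact ⟨s, ⟨hsU, Ioo_subset_Icc_self hs⟩,
    ⟨_, fun ε hε ↦ mul_pos hK hε, tendsto_const_mul_nhdsGT_zero K, hshadow⟩, hnot⟩
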